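/- arXiv:2501.07749 — 3 statements merged into one kernel-verified Lean document; each statement's English description precedes it below -/
import Mathlib

section
/- A 4×4 complex matrix A commutes with the two-site magnetization M₂ = σ³⊗I + I⊗σ³ if and only if A is a complex linear combination of the six matrices I⊗I, σ³⊗I, I⊗σ³, σ³⊗σ³, σ⁺⊗σ⁻ and σ⁻⊗σ⁺. (This characterizes the general form of spin-conserving nearest-neighbor Hamiltonian densities and jump operators, Eqs. (5)–(6) of the paper.) -/
open Kronecker Matrix

noncomputable section

/-- The Pauli matrix `σ³`. -/
def σ3 : Matrix (Fin 2) (Fin 2) ℂ := !![1, 0; 0, -1]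
/-- The raising operator `σ⁺`. -/
def σp : Matrix (Fin 2) (Fin 2) ℂ := !![0, 1; 0, 0]
/-- The lowering operator `σ⁻`. -/
def σm : Matrix (Fin 2) (Fin 2) ℂ := !![0, 0; 1, 0]
/-- The one-site identity matrix. -/
def I2 : Matrix (Fin 2) (Fin 2) ℂ := 1
/-- The two-site magnetization `M₂ = σ³⊗I + I⊗σ³`. -/
def M₂ : Matrix (Fin 2 × Fin 2) (Fin 2 × Fin 2) ℂ := σ3 ⊗ₖ I2 + I2 ⊗ₖ σ3

/-!
In the standard basis `M₂` is diagonal, so `A` commutes with it exactly when `A` has no entry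
linking two basis states of different magnetization. Two states of a pair of sites have the same
magnetization exactly when they agree up to exchanging the sites, so `A` is a diagonal matrix plus
the two exchange entries, which are the multiples of `σ⁺⊗σ⁻` and `σ⁻⊗σ⁺`. Finally, every function
of two signs is a multilinear polynomial in them, so the diagonal matrices are the combinations of
`I⊗I`, `σ³⊗I`, `I⊗σ³` and `σ³⊗σ³`.
-/

theorem commute_diagonal_right_iff {n R : Type*} [Fintype n] [DecidableEq n]
    [NonUnitalNonAssocCommSemiring R] [IsRightCancelMulZero R] {A : Matrix n n R} {d : n → R} :
    Commute A (diagonal d) ↔ ∀ i j, d i = d j ∨ A i j = 0 := by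
  simp only [commute_iff_eq, ← Matrix.ext_iff, mul_diagonal, diagonal_mul]
  refine forall₂_congr fun i j ↦ ?_
  rw [mul_comm, mul_eq_mul_right_iff, eq_comm (a := d j)]

theorem diagonal_kronecker_one_add_one_kronecker_diagonal {m n R : Type*} [DecidableEq m]
    [DecidableEq n] [NonAssocSemiring R] (d : m → R) (e : n → R) :
    diagonal d ⊗ₖ (1 : Matrix n n R) + (1 : Matrix m m R) ⊗ₖ diagonal e =
      diagonal fun p ↦ d p.1 + e p.2 := by
  simp only [← diagonal_one, diagonal_kronecker_diagonal, diagonal_add, mul_one, one_mul]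

theorem forall_eq_or_eq_swap_or_eq_zero_iff {R : Type*} [AddMonoid R]
    {A : Matrix (Fin 2 × Fin 2) (Fin 2 × Fin 2) R} :
    (∀ p q, (p = q ∨ p = q.swap) ∨ A p q = 0) ↔
      ∃ (f : Fin 2 × Fin 2 → R) (a b : R),
        A = diagonal f + single (0, 1) (1, 0) a + single (1, 0) (0, 1) b := by
  constructor
  · intro hA
    refine ⟨A.diag, A (0, 1) (1, 0), A (1, 0) (0, 1), ?_⟩
    ext ⟨i, j⟩ ⟨k, l⟩
    have hentry := hA (i, j) (k, l)
    fin_cases i <;> fin_cases j <;> fin_cases k <;> fin_cases l <;> simp_all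
  · rintro ⟨f, a, b, rfl⟩ ⟨i, j⟩ ⟨k, l⟩
    fin_cases i <;> fin_cases j <;> fin_cases k <;> fin_cases l <;> simp

/-- The eigenvalue `±1` of `σ³` on each basis state of one site. -/
def spin : Fin 2 → ℂ := ![1, -1]

theorem spin_add_spin_eq_iff {p q : Fin 2 × Fin 2} :
    spin p.1 + spin p.2 = spin q.1 + spin q.2 ↔ p = q ∨ p = q.swap := by
  obtain ⟨i, j⟩ := p
  obtain ⟨k, l⟩ := q
  fin_cases i <;> fin_cases j <;> fin_cases k <;> fin_cases l <;> norm_num [spin]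

theorem exists_eq_spin_polynomial (f : Fin 2 × Fin 2 → ℂ) :
    ∃ c₁ c₂ c₃ c₄ : ℂ,
      f = fun p ↦ c₁ + c₂ * spin p.1 + c₃ * spin p.2 + c₄ * (spin p.1 * spin p.2) := by
  -- Each coefficient is the average of `f` against the corresponding monomial.
  refine ⟨(f (0, 0) + f (0, 1) + f (1, 0) + f (1, 1)) / 4,
    (f (0, 0) + f (0, 1) - f (1, 0) - f (1, 1)) / 4,
    (f (0, 0) - f (0, 1) + f (1, 0) - f (1, 1)) / 4,
    (f (0, 0) - f (0, 1) - f (1, 0) + f (1, 1)) / 4, ?_⟩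
  ext ⟨i, j⟩
  fin_cases i <;> fin_cases j <;> simp [spin] <;> ring

theorem σ3_eq_diagonal : σ3 = diagonal spin := by
  simp [σ3, spin, diagonal_fin_two]

theorem σp_eq_single : σp = single 0 1 1 := by
  ext i j
  fin_cases i <;> fin_cases j <;> rfl

theorem σm_eq_single : σm = single 1 0 1 := by
  ext i j
  fin_cases i <;> fin_cases j <;> rfl

theorem smul_σp_kronecker_σm (a : ℂ) : a • (σp ⊗ₖ σm) = single (0, 1) (1, 0) a := by
  rw [σp_eq_single, σm_eq_single, single_kronecker_single, smul_single, mul_one, smul_eq_mul,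
    mul_one]

theorem smul_σm_kronecker_σp (a : ℂ) : a • (σm ⊗ₖ σp) = single (1, 0) (0, 1) a := by
  rw [σp_eq_single, σm_eq_single, single_kronecker_single, smul_single, mul_one, smul_eq_mul,
    mul_one]

theorem diagonal_spin_polynomial (c₁ c₂ c₃ c₄ : ℂ) :
    diagonal (fun p : Fin 2 × Fin 2 ↦
        c₁ + c₂ * spin p.1 + c₃ * spin p.2 + c₄ * (spin p.1 * spin p.2)) =
      c₁ • (I2 ⊗ₖ I2) + c₂ • (σ3 ⊗ₖ I2) + c₃ • (I2 ⊗ₖ σ3) + c₄ • (σ3 ⊗ₖ σ3) := by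
  simp only [σ3_eq_diagonal, I2, ← diagonal_one, diagonal_kronecker_diagonal, ← diagonal_smul,
    diagonal_add, Pi.smul_apply, smul_eq_mul, mul_one, one_mul]

theorem M₂_eq_diagonal : M₂ = diagonal fun p ↦ spin p.1 + spin p.2 := by
  rw [M₂, σ3_eq_diagonal, I2, diagonal_kronecker_one_add_one_kronecker_diagonal]

theorem commute_M₂_iff {A : Matrix (Fin 2 × Fin 2) (Fin 2 × Fin 2) ℂ} :
    Commute A M₂ ↔
      ∃ (f : Fin 2 × Fin 2 → ℂ) (a b : ℂ),
        A = diagonal f + a • (σp ⊗ₖ σm) + b • (σm ⊗ₖ σp) := by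
  simp only [M₂_eq_diagonal, commute_diagonal_right_iff, spin_add_spin_eq_iff,
    forall_eq_or_eq_swap_or_eq_zero_iff, smul_σp_kronecker_σm, smul_σm_kronecker_σp]

/-- A 4×4 complex matrix commutes with the two-site magnetization `M₂` iff it is a
complex linear combination of `I⊗I`, `σ³⊗I`, `I⊗σ³`, `σ³⊗σ³`, `σ⁺⊗σ⁻`, `σ⁻⊗σ⁺`. -/
theorem spin_conserving_characterization (A : Matrix (Fin 2 × Fin 2) (Fin 2 × Fin 2) ℂ) :
    A * M₂ = M₂ * A ↔
      ∃ c₁ c₂ c₃ c₄ c₅ c₆ : ℂ,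
        A = c₁ • (I2 ⊗ₖ I2) + c₂ • (σ3 ⊗ₖ I2) + c₃ • (I2 ⊗ₖ σ3)
          + c₄ • (σ3 ⊗ₖ σ3) + c₅ • (σp ⊗ₖ σm) + c₆ • (σm ⊗ₖ σp) := by
  rw [← commute_iff_eq, commute_M₂_iff]
  constructor
  · rintro ⟨f, a, b, rfl⟩
    obtain ⟨c₁, c₂, c₃, c₄, rfl⟩ := exists_eq_spin_polynomial f
    exact ⟨c₁, c₂, c₃, c₄, a, b, by rw [diagonal_spin_polynomial]⟩
  · rintro ⟨c₁, c₂, c₃, c₄, c₅, c₆, rfl⟩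
    exact ⟨_, c₅, c₆, by rw [← diagonal_spin_polynomial]⟩
end
end

section
/- For the Hamiltonian density h, the coherent spin current j^H := 2i(α σ⁺⊗σ⁻ − conj(α) σ⁻⊗σ⁺) satisfies: i(h(σ³⊗I) − (σ³⊗I)h) = −j^H, i(h(I⊗σ³) − (I⊗σ³)h) = j^H, and h commutes with σ³⊗σ³. In particular h commutes with M₂ = σ³⊗I + I⊗σ³ (strong spin conservation of the coherent part). -/
open Kronecker Matrix

noncomputable section

/-- The Hamiltonian density `h = α σ⁺⊗σ⁻ + ᾱ σ⁻⊗σ⁺ + β σ³⊗I + γ σ³⊗σ³`. -/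
def ham (α : ℂ) (β γ : ℝ) : Matrix (Fin 2 × Fin 2) (Fin 2 × Fin 2) ℂ :=
  α • (σp ⊗ₖ σm) + (starRingEnd ℂ α) • (σm ⊗ₖ σp) + (β : ℂ) • (σ3 ⊗ₖ I2) + (γ : ℂ) • (σ3 ⊗ₖ σ3)

/-- The coherent spin current `j^H = 2i(α σ⁺⊗σ⁻ − ᾱ σ⁻⊗σ⁺)`. -/
def jH (α : ℂ) : Matrix (Fin 2 × Fin 2) (Fin 2 × Fin 2) ℂ :=
  (2 * Complex.I) • (α • (σp ⊗ₖ σm) - (starRingEnd ℂ α) • (σm ⊗ₖ σp))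

/- Each hopping term `σ⁺⊗σ⁻`, `σ⁻⊗σ⁺` raises one spin and lowers the other, so multiplying it by
`σ³` on either site, from either side, gives the term back up to a sign. Exchanging the two terms,
the two sites or the two sides flips this sign. Hence the commutators of the hopping with `σ³⊗I` and
`I⊗σ³` are opposite multiples of the current, its products with `M₂` vanish, and `σ³⊗σ³` acts on it
as `-1` from both sides. The rest of `h` is diagonal, so it commutes with all these operators. -/

theorem neg_kronecker {l m n p R : Type*} [Mul R] [HasDistribNeg R]
    (A : Matrix l m R) (B : Matrix n p R) : (-A) ⊗ₖ B = -(A ⊗ₖ B) :=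
  ext fun _ _ ↦ neg_mul _ _

theorem kronecker_neg {l m n p R : Type*} [Mul R] [HasDistribNeg R]
    (A : Matrix l m R) (B : Matrix n p R) : A ⊗ₖ (-B) = -(A ⊗ₖ B) :=
  ext fun _ _ ↦ mul_neg _ _

theorem add_lie_of_commute {A : Type*} [NonUnitalNonAssocRing A] (x : A) {y z : A}
    (h : Commute y z) : ⁅x + y, z⁆ = ⁅x, z⁆ := by
  rw [Ring.lie_def, Ring.lie_def, add_mul, mul_add, h.eq, add_sub_add_right_eq_sub]

/-- The spin exchange `a σ⁺⊗σ⁻ + b σ⁻⊗σ⁺` with independent amplitudes; `hopping α ᾱ` is the exchange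
part of `ham α β γ` and `hopping α (-ᾱ)` is, up to the factor `2i`, the current `jH α`. -/
def hopping (a b : ℂ) : Matrix (Fin 2 × Fin 2) (Fin 2 × Fin 2) ℂ :=
  a • (σp ⊗ₖ σm) + b • (σm ⊗ₖ σp)

theorem σ3_mul_σp : σ3 * σp = σp := by
  ext i j
  fin_cases i <;> fin_cases j <;> simp [σ3, σp]

theorem σp_mul_σ3 : σp * σ3 = -σp := by
  ext i j
  fin_cases i <;> fin_cases j <;> simp [σ3, σp]

theorem σ3_mul_σm : σ3 * σm = -σm := by
  ext i j
  fin_cases i <;> fin_cases j <;> simp [σ3, σm]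

theorem σm_mul_σ3 : σm * σ3 = σm := by
  ext i j
  fin_cases i <;> fin_cases j <;> simp [σ3, σm]

section Hopping

variable (a b : ℂ)

theorem hopping_mul_σ3_kronecker_one :
    hopping a b * (σ3 ⊗ₖ I2) = -hopping a (-b) := by
  simp only [hopping, I2, add_mul, smul_mul_assoc, ← mul_kronecker_mul, σp_mul_σ3, σm_mul_σ3,
    mul_one, neg_kronecker]
  module

theorem σ3_kronecker_one_mul_hopping :
    (σ3 ⊗ₖ I2) * hopping a b = hopping a (-b) := by
  simp only [hopping, I2, mul_add, mul_smul_comm, ← mul_kronecker_mul, σ3_mul_σp, σ3_mul_σm,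
    one_mul, neg_kronecker, smul_neg, neg_smul]

theorem hopping_mul_one_kronecker_σ3 :
    hopping a b * (I2 ⊗ₖ σ3) = hopping a (-b) := by
  simp only [hopping, I2, add_mul, smul_mul_assoc, ← mul_kronecker_mul, σp_mul_σ3, σm_mul_σ3,
    mul_one, kronecker_neg, smul_neg, neg_smul]

theorem one_kronecker_σ3_mul_hopping :
    (I2 ⊗ₖ σ3) * hopping a b = -hopping a (-b) := by
  simp only [hopping, I2, mul_add, mul_smul_comm, ← mul_kronecker_mul, σ3_mul_σp, σ3_mul_σm,
    one_mul, kronecker_neg]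
  module

theorem lie_hopping_σ3_kronecker_one :
    ⁅hopping a b, σ3 ⊗ₖ I2⁆ = -(2 : ℂ) • hopping a (-b) := by
  rw [Ring.lie_def, hopping_mul_σ3_kronecker_one, σ3_kronecker_one_mul_hopping]
  module

theorem lie_hopping_one_kronecker_σ3 :
    ⁅hopping a b, I2 ⊗ₖ σ3⁆ = (2 : ℂ) • hopping a (-b) := by
  rw [Ring.lie_def, hopping_mul_one_kronecker_σ3, one_kronecker_σ3_mul_hopping]
  module

theorem σ3_kronecker_one_mul_one_kronecker_σ3 : (σ3 ⊗ₖ I2) * (I2 ⊗ₖ σ3) = σ3 ⊗ₖ σ3 := by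
  rw [← mul_kronecker_mul, I2, mul_one, one_mul]

theorem commute_hopping_σ3_kronecker_σ3 : Commute (hopping a b) (σ3 ⊗ₖ σ3) := by
  have hright : hopping a b * (σ3 ⊗ₖ σ3) = -hopping a b := by
    rw [← σ3_kronecker_one_mul_one_kronecker_σ3, ← mul_assoc, hopping_mul_σ3_kronecker_one,
      neg_mul, hopping_mul_one_kronecker_σ3, neg_neg]
  have hleft : (σ3 ⊗ₖ σ3) * hopping a b = -hopping a b := by
    rw [← σ3_kronecker_one_mul_one_kronecker_σ3, mul_assoc, one_kronecker_σ3_mul_hopping,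
      mul_neg, σ3_kronecker_one_mul_hopping, neg_neg]
  exact hright.trans hleft.symm

theorem commute_hopping_total_spin : Commute (hopping a b) (σ3 ⊗ₖ I2 + I2 ⊗ₖ σ3) := by
  have hright : hopping a b * (σ3 ⊗ₖ I2 + I2 ⊗ₖ σ3) = 0 := by
    rw [mul_add, hopping_mul_σ3_kronecker_one, hopping_mul_one_kronecker_σ3, neg_add_cancel]
  have hleft : (σ3 ⊗ₖ I2 + I2 ⊗ₖ σ3) * hopping a b = 0 := by
    rw [add_mul, σ3_kronecker_one_mul_hopping, one_kronecker_σ3_mul_hopping, add_neg_cancel]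
  exact hright.trans hleft.symm

end Hopping

section Diagonal

theorem σ3_kronecker_one_eq_diagonal : σ3 ⊗ₖ I2 = diagonal fun s ↦ spin s.1 := by
  simp only [σ3_eq_diagonal, I2, ← diagonal_one, diagonal_kronecker_diagonal, mul_one]

theorem one_kronecker_σ3_eq_diagonal : I2 ⊗ₖ σ3 = diagonal fun s ↦ spin s.2 := by
  simp only [σ3_eq_diagonal, I2, ← diagonal_one, diagonal_kronecker_diagonal, one_mul]

theorem σ3_kronecker_σ3_eq_diagonal : σ3 ⊗ₖ σ3 = diagonal fun s ↦ spin s.1 * spin s.2 := by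
  rw [σ3_eq_diagonal, diagonal_kronecker_diagonal]

variable (v : Fin 2 × Fin 2 → ℂ)

theorem commute_diagonal_σ3_kronecker_one : Commute (diagonal v) (σ3 ⊗ₖ I2) := by
  rw [σ3_kronecker_one_eq_diagonal]
  exact commute_diagonal _ _

theorem commute_diagonal_one_kronecker_σ3 : Commute (diagonal v) (I2 ⊗ₖ σ3) := by
  rw [one_kronecker_σ3_eq_diagonal]
  exact commute_diagonal _ _

theorem commute_diagonal_σ3_kronecker_σ3 : Commute (diagonal v) (σ3 ⊗ₖ σ3) := by
  rw [σ3_kronecker_σ3_eq_diagonal]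
  exact commute_diagonal _ _

end Diagonal

theorem ham_eq_hopping_add_diagonal (α : ℂ) (β γ : ℝ) :
    ham α β γ = hopping α (starRingEnd ℂ α) +
      diagonal fun s ↦ β * spin s.1 + γ * (spin s.1 * spin s.2) := by
  rw [ham, σ3_kronecker_one_eq_diagonal, σ3_kronecker_σ3_eq_diagonal, ← diagonal_smul,
    ← diagonal_smul, add_assoc, diagonal_add]
  rfl

theorem jH_eq_smul_hopping (α : ℂ) :
    jH α = (2 * Complex.I) • hopping α (-starRingEnd ℂ α) := by
  rw [jH, hopping, neg_smul, sub_eq_add_neg]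

theorem coherent_spin_current_general (a b : ℂ) (v : Fin 2 × Fin 2 → ℂ) :
    Complex.I • ⁅hopping a b + diagonal v, σ3 ⊗ₖ I2⁆ = -((2 * Complex.I) • hopping a (-b))
    ∧ Complex.I • ⁅hopping a b + diagonal v, I2 ⊗ₖ σ3⁆ = (2 * Complex.I) • hopping a (-b)
    ∧ Commute (hopping a b + diagonal v) (σ3 ⊗ₖ σ3)
    ∧ Commute (hopping a b + diagonal v) (σ3 ⊗ₖ I2 + I2 ⊗ₖ σ3) := by
  have hleft := commute_diagonal_σ3_kronecker_one v
  have hright := commute_diagonal_one_kronecker_σ3 v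
  refine ⟨?_, ?_, ?_, ?_⟩
  · rw [add_lie_of_commute _ hleft, lie_hopping_σ3_kronecker_one]
    module
  · rw [add_lie_of_commute _ hright, lie_hopping_one_kronecker_σ3]
    module
  · exact (commute_hopping_σ3_kronecker_σ3 a b).add_left (commute_diagonal_σ3_kronecker_σ3 v)
  · exact (commute_hopping_total_spin a b).add_left (hleft.add_right hright)

/-- Strong spin conservation of the coherent part:
`i[h, σ³⊗I] = −j^H`, `i[h, I⊗σ³] = j^H`, `[h, σ³⊗σ³] = 0` and `[h, M₂] = 0`. -/
theorem coherent_spin_current (α : ℂ) (β γ : ℝ) :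
    Complex.I • (ham α β γ * (σ3 ⊗ₖ I2) - (σ3 ⊗ₖ I2) * ham α β γ) = -(jH α)
    ∧ Complex.I • (ham α β γ * (I2 ⊗ₖ σ3) - (I2 ⊗ₖ σ3) * ham α β γ) = jH α
    ∧ ham α β γ * (σ3 ⊗ₖ σ3) = (σ3 ⊗ₖ σ3) * ham α β γ
    ∧ ham α β γ * (σ3 ⊗ₖ I2 + I2 ⊗ₖ σ3) = (σ3 ⊗ₖ I2 + I2 ⊗ₖ σ3) * ham α β γ := by
  rw [ham_eq_hopping_add_diagonal, jH_eq_smul_hopping]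
  exact coherent_spin_current_general α (starRingEnd ℂ α) _
end
end

section
/- Let h and L_i (i in a finite index set) be arbitrary 4×4 complex matrices, and define the three-site Lindblad generator on 8×8 complex matrices by ℒ₃*(A) := i((h⊗I)A − A(h⊗I)) + i((I⊗h)A − A(I⊗h)) + ½Σ_i((L_i⊗I)ᴴ(A(L_i⊗I) − (L_i⊗I)A) + ((L_i⊗I)ᴴA − A(L_i⊗I)ᴴ)(L_i⊗I)) + ½Σ_i((I⊗L_i)ᴴ(A(I⊗L_i) − (I⊗L_i)A) + ((I⊗L_i)ᴴA − A(I⊗L_i)ᴴ)(I⊗L_i)). Then for any 2×2 complex matrices q and r, the exact Leibniz rule holds for observables at distance two: ℒ₃*(q⊗I⊗r) = ℒ₃*(q⊗I⊗I)·(I⊗I⊗r) + (q⊗I⊗I)·ℒ₃*(I⊗I⊗r). (The vanishing of the Leibniz error term e(x,y) for |x−y| ≥ 2 in Appendix A.) -/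
open Kronecker Matrix

noncomputable section

/-- Reindexing of a (two-site)⊗(one-site) Kronecker product as a three-site operator. -/
def assoc3 :
    Matrix ((Fin 2 × Fin 2) × Fin 2) ((Fin 2 × Fin 2) × Fin 2) ℂ
      ≃ Matrix (Fin 2 × (Fin 2 × Fin 2)) (Fin 2 × (Fin 2 × Fin 2)) ℂ :=
  Matrix.reindex (Equiv.prodAssoc (Fin 2) (Fin 2) (Fin 2))
    (Equiv.prodAssoc (Fin 2) (Fin 2) (Fin 2))

/-- The three-site Lindblad generator built from a two-site Hamiltonian density `h` and
two-site jump operators `L_i`, acting on both nearest-neighbor pairs. -/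
def lind3 {N : ℕ} (h : Matrix (Fin 2 × Fin 2) (Fin 2 × Fin 2) ℂ)
    (L : Fin N → Matrix (Fin 2 × Fin 2) (Fin 2 × Fin 2) ℂ)
    (A : Matrix (Fin 2 × (Fin 2 × Fin 2)) (Fin 2 × (Fin 2 × Fin 2)) ℂ) :
    Matrix (Fin 2 × (Fin 2 × Fin 2)) (Fin 2 × (Fin 2 × Fin 2)) ℂ :=
  Complex.I • (assoc3 (h ⊗ₖ I2) * A - A * assoc3 (h ⊗ₖ I2))
    + Complex.I • ((I2 ⊗ₖ h) * A - A * (I2 ⊗ₖ h))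
    + (1 / 2 : ℂ) • ∑ i,
        ((assoc3 (L i ⊗ₖ I2))ᴴ * (A * assoc3 (L i ⊗ₖ I2) - assoc3 (L i ⊗ₖ I2) * A)
          + ((assoc3 (L i ⊗ₖ I2))ᴴ * A - A * (assoc3 (L i ⊗ₖ I2))ᴴ) * assoc3 (L i ⊗ₖ I2))
    + (1 / 2 : ℂ) • ∑ i,
        ((I2 ⊗ₖ L i)ᴴ * (A * (I2 ⊗ₖ L i) - (I2 ⊗ₖ L i) * A)
          + ((I2 ⊗ₖ L i)ᴴ * A - A * (I2 ⊗ₖ L i)ᴴ) * (I2 ⊗ₖ L i))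

/-!
A Lindblad generator commutes with left and right multiplication by any element that commutes with
its Hamiltonian, its jump operators and their adjoints; as it annihilates the identity, it also
annihilates every such element. The three-site generator is the sum of a left-bond and a right-bond
generator; the coefficients of the former commute with `I ⊗ I ⊗ r`, those of the latter with
`q ⊗ I ⊗ I`. So on the product `(q ⊗ I ⊗ I)(I ⊗ I ⊗ r)` each bond differentiates only one of the
two factors, and the cross terms of the Leibniz rule vanish.
-/

section Commutator

variable {R : Type*} [NonUnitalRing R] {X B : R}

theorem lie_mul_of_commute_right (hX : Commute X B) (A : R) : ⁅X, A * B⁆ = ⁅X, A⁆ * B := by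
  simp only [Ring.lie_def, sub_mul, mul_assoc, hX.eq]

theorem mul_lie_of_commute_right (hX : Commute X B) (A : R) : ⁅A * B, X⁆ = ⁅A, X⁆ * B := by
  simp only [Ring.lie_def, sub_mul, mul_assoc, hX.eq]

theorem lie_mul_of_commute_left (hX : Commute X B) (A : R) : ⁅X, B * A⁆ = B * ⁅X, A⁆ := by
  simp only [Ring.lie_def, mul_sub, ← mul_assoc, hX.eq]

theorem mul_lie_of_commute_left (hX : Commute X B) (A : R) : ⁅B * A, X⁆ = B * ⁅A, X⁆ := by
  simp only [Ring.lie_def, mul_sub, ← mul_assoc, hX.eq]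

end Commutator

section Dissipator

variable {R : Type*} [NonUnitalRing R] [Star R] {L B : R}

/-- Twice the Heisenberg-picture dissipator of the jump operator `L`; the factor `1 / 2` is supplied
by `lindbladian`. -/
def dissipator (L A : R) : R := star L * ⁅A, L⁆ + ⁅star L, A⁆ * L

theorem dissipator_mul_of_commute_right (hL : Commute L B) (hL' : Commute (star L) B) (A : R) :
    dissipator L (A * B) = dissipator L A * B := by
  simp only [dissipator, mul_lie_of_commute_right hL, lie_mul_of_commute_right hL', add_mul,
    mul_assoc, hL.eq]

theorem dissipator_mul_of_commute_left (hL : Commute L B) (hL' : Commute (star L) B) (A : R) :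
    dissipator L (B * A) = B * dissipator L A := by
  simp only [dissipator, mul_lie_of_commute_left hL, lie_mul_of_commute_left hL', mul_add,
    ← mul_assoc, hL'.eq]

end Dissipator

/-- Membership of `B` in the commutant of the coefficients of a Lindblad generator: the Hamiltonian
`h`, the jump operators `L i` and their adjoints. -/
structure CommutesWithCoeffs {R ι : Type*} [Mul R] [Star R] (h : R) (L : ι → R) (B : R) : Prop where
  hamiltonian : Commute h B
  jump : ∀ i, Commute (L i) B
  star_jump : ∀ i, Commute (star (L i)) B

section Lindbladian

variable {R ι κ : Type*} [Ring R] [Star R] [Algebra ℂ R] [Fintype ι] [Fintype κ]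

/-- The Heisenberg-picture Lindblad generator with Hamiltonian `h` and jump operators `L i`. -/
def lindbladian (h : R) (L : ι → R) (A : R) : R :=
  Complex.I • ⁅h, A⁆ + (1 / 2 : ℂ) • ∑ i, dissipator (L i) A

variable {h : R} {L : ι → R} {B : R}

theorem lindbladian_mul_right (hB : CommutesWithCoeffs h L B) (A : R) :
    lindbladian h L (A * B) = lindbladian h L A * B := by
  simp only [lindbladian, lie_mul_of_commute_right hB.hamiltonian,
    dissipator_mul_of_commute_right (hB.jump _) (hB.star_jump _), add_mul, smul_mul_assoc,
    Finset.sum_mul]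

theorem lindbladian_mul_left (hB : CommutesWithCoeffs h L B) (A : R) :
    lindbladian h L (B * A) = B * lindbladian h L A := by
  simp only [lindbladian, lie_mul_of_commute_left hB.hamiltonian,
    dissipator_mul_of_commute_left (hB.jump _) (hB.star_jump _), mul_add, mul_smul_comm,
    Finset.mul_sum]

theorem lindbladian_one (h : R) (L : ι → R) : lindbladian h L 1 = 0 := by
  simp [lindbladian, dissipator, Ring.lie_def]

theorem lindbladian_eq_zero (hB : CommutesWithCoeffs h L B) : lindbladian h L B = 0 := by
  simpa only [one_mul, lindbladian_one, zero_mul] using lindbladian_mul_right hB 1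

theorem lindbladian_add_lindbladian_leibniz {h₁ h₂ : R} {L₁ : ι → R} {L₂ : κ → R} {Q T : R}
    (hQ : CommutesWithCoeffs h₂ L₂ Q) (hT : CommutesWithCoeffs h₁ L₁ T) :
    lindbladian h₁ L₁ (Q * T) + lindbladian h₂ L₂ (Q * T) =
      (lindbladian h₁ L₁ Q + lindbladian h₂ L₂ Q) * T +
        Q * (lindbladian h₁ L₁ T + lindbladian h₂ L₂ T) := by
  rw [lindbladian_mul_right hT, lindbladian_mul_left hQ, lindbladian_eq_zero hQ,
    lindbladian_eq_zero hT, add_zero, zero_add]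

end Lindbladian

section Bonds

variable {l m n α : Type*} [CommSemiring α]

theorem commute_kronecker_one_one_kronecker [Fintype l] [Fintype m] [DecidableEq l]
    [DecidableEq m] (A : Matrix l l α) (B : Matrix m m α) : Commute (A ⊗ₖ 1) (1 ⊗ₖ B) := by
  simp only [commute_iff_eq, ← mul_kronecker_mul, mul_one, one_mul]

/-- The operator `M ⊗ I` on three sites, for `M` acting on the first two. As in `assoc3`, three-site
indices are bracketed to the right. -/
def leftBond (n : Type*) [DecidableEq n] (M : Matrix (l × m) (l × m) α) :
    Matrix (l × (m × n)) (l × (m × n)) α :=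
  reindex (Equiv.prodAssoc l m n) (Equiv.prodAssoc l m n) (M ⊗ₖ 1)

/-- The operator `I ⊗ M` on three sites, for `M` acting on the last two. -/
def rightBond (l : Type*) [DecidableEq l] (M : Matrix (m × n) (m × n) α) :
    Matrix (l × (m × n)) (l × (m × n)) α :=
  1 ⊗ₖ M

theorem conjTranspose_leftBond [DecidableEq n] [StarRing α] (M : Matrix (l × m) (l × m) α) :
    (leftBond n M)ᴴ = leftBond n Mᴴ := by
  rw [leftBond, conjTranspose_reindex, conjTranspose_kronecker, conjTranspose_one, leftBond]

theorem conjTranspose_rightBond [DecidableEq l] [StarRing α] (M : Matrix (m × n) (m × n) α) :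
    (rightBond l M)ᴴ = rightBond l Mᴴ := by
  rw [rightBond, conjTranspose_kronecker, conjTranspose_one, rightBond]

variable [Fintype l] [Fintype m] [Fintype n] [DecidableEq l] [DecidableEq m] [DecidableEq n]

theorem commute_leftBond (M : Matrix (l × m) (l × m) α) (r : Matrix n n α) :
    Commute (leftBond n M) (1 ⊗ₖ (1 ⊗ₖ r)) := by
  rw [← kronecker_assoc, one_kronecker_one]
  exact (commute_kronecker_one_one_kronecker M r).map (reindexAlgEquiv α α (Equiv.prodAssoc l m n))

theorem commute_rightBond (M : Matrix (m × n) (m × n) α) (q : Matrix l l α) :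
    Commute (rightBond l M) (q ⊗ₖ (1 ⊗ₖ 1)) := by
  rw [one_kronecker_one]
  exact (commute_kronecker_one_one_kronecker q M).symm

theorem commutesWithCoeffs_leftBond {ι : Type*} [StarRing α] (h : Matrix (l × m) (l × m) α)
    (L : ι → Matrix (l × m) (l × m) α) (r : Matrix n n α) :
    CommutesWithCoeffs (leftBond n h) (fun i ↦ leftBond n (L i)) (1 ⊗ₖ (1 ⊗ₖ r)) where
  hamiltonian := commute_leftBond h r
  jump i := commute_leftBond (L i) r
  star_jump i := by
    rw [star_eq_conjTranspose, conjTranspose_leftBond]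
    exact commute_leftBond (L i)ᴴ r

theorem commutesWithCoeffs_rightBond {ι : Type*} [StarRing α] (h : Matrix (m × n) (m × n) α)
    (L : ι → Matrix (m × n) (m × n) α) (q : Matrix l l α) :
    CommutesWithCoeffs (rightBond l h) (fun i ↦ rightBond l (L i)) (q ⊗ₖ (1 ⊗ₖ 1)) where
  hamiltonian := commute_rightBond h q
  jump i := commute_rightBond (L i) q
  star_jump i := by
    rw [star_eq_conjTranspose, conjTranspose_rightBond]
    exact commute_rightBond (L i)ᴴ q

end Bonds

section ThreeSites

variable {l m n ι κ : Type*} [Fintype l] [Fintype m] [Fintype n] [DecidableEq l] [DecidableEq m]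
  [DecidableEq n] [Fintype ι] [Fintype κ]

/-- The generator of `lind3` with arbitrary finite-dimensional sites and with separate Hamiltonian
and jump operators on the two bonds. -/
def threeSiteLindbladian (h₁ : Matrix (l × m) (l × m) ℂ) (L₁ : ι → Matrix (l × m) (l × m) ℂ)
    (h₂ : Matrix (m × n) (m × n) ℂ) (L₂ : κ → Matrix (m × n) (m × n) ℂ)
    (A : Matrix (l × (m × n)) (l × (m × n)) ℂ) : Matrix (l × (m × n)) (l × (m × n)) ℂ :=
  lindbladian (leftBond n h₁) (fun i ↦ leftBond n (L₁ i)) A +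
    lindbladian (rightBond l h₂) (fun i ↦ rightBond l (L₂ i)) A

theorem lind3_eq_threeSiteLindbladian {N : ℕ} (h : Matrix (Fin 2 × Fin 2) (Fin 2 × Fin 2) ℂ)
    (L : Fin N → Matrix (Fin 2 × Fin 2) (Fin 2 × Fin 2) ℂ) :
    lind3 h L = threeSiteLindbladian h L h L := by
  funext A
  exact (add_assoc _ _ _).trans (add_add_add_comm _ _ _ _)

theorem leibniz_distance_two_general (h₁ : Matrix (l × m) (l × m) ℂ)
    (L₁ : ι → Matrix (l × m) (l × m) ℂ) (h₂ : Matrix (m × n) (m × n) ℂ)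
    (L₂ : κ → Matrix (m × n) (m × n) ℂ) (q : Matrix l l ℂ) (r : Matrix n n ℂ) :
    threeSiteLindbladian h₁ L₁ h₂ L₂ (q ⊗ₖ (1 ⊗ₖ r)) =
      threeSiteLindbladian h₁ L₁ h₂ L₂ (q ⊗ₖ (1 ⊗ₖ 1)) * (1 ⊗ₖ (1 ⊗ₖ r)) +
        (q ⊗ₖ (1 ⊗ₖ 1)) * threeSiteLindbladian h₁ L₁ h₂ L₂ (1 ⊗ₖ (1 ⊗ₖ r)) := by
  have factorization : q ⊗ₖ ((1 : Matrix m m ℂ) ⊗ₖ r) = (q ⊗ₖ (1 ⊗ₖ 1)) * (1 ⊗ₖ (1 ⊗ₖ r)) := by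
    simp only [← mul_kronecker_mul, mul_one, one_mul]
  rw [factorization]
  exact lindbladian_add_lindbladian_leibniz (commutesWithCoeffs_rightBond h₂ L₂ q)
    (commutesWithCoeffs_leftBond h₁ L₁ r)

end ThreeSites

/-- The exact Leibniz rule for observables at distance two:
`ℒ₃*(q⊗I⊗r) = ℒ₃*(q⊗I⊗I)·(I⊗I⊗r) + (q⊗I⊗I)·ℒ₃*(I⊗I⊗r)`. -/
theorem leibniz_distance_two {N : ℕ} (h : Matrix (Fin 2 × Fin 2) (Fin 2 × Fin 2) ℂ)
    (L : Fin N → Matrix (Fin 2 × Fin 2) (Fin 2 × Fin 2) ℂ)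
    (q r : Matrix (Fin 2) (Fin 2) ℂ) :
    lind3 h L (q ⊗ₖ (I2 ⊗ₖ r))
      = lind3 h L (q ⊗ₖ (I2 ⊗ₖ I2)) * (I2 ⊗ₖ (I2 ⊗ₖ r))
        + (q ⊗ₖ (I2 ⊗ₖ I2)) * lind3 h L (I2 ⊗ₖ (I2 ⊗ₖ r)) := by
  rw [lind3_eq_threeSiteLindbladian]
  exact leibniz_distance_two_general h L h L q r
end
end
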